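/- arXiv:2403.05919 — 7 statements merged into one kernel-verified Lean document; each statement's English description precedes it below -/
import Mathlib

section
/- Let A be a commutative associative algebra over a field of characteristic zero, and let C₁, C₂ : A × A → A be bilinear maps such that (i) C₁ is antisymmetric: C₁(f,g) = -C₁(g,f) for all f,g; (ii) C₂ is symmetric: C₂(f,g) = C₂(g,f) for all f,g; (iii) the order-two associativity identity holds for all f,g,h ∈ A: C₂(f,g)·h + C₁(C₁(f,g),h) + C₂(f·g,h) = f·C₂(g,h) + C₁(f,C₁(g,h)) + C₂(f,g·h). Then C₁ satisfies the Jacobi identity: C₁(f,C₁(g,h)) + C₁(g,C₁(h,f)) + C₁(h,C₁(f,g)) = 0 for all f,g,h ∈ A. If moreover C₁ satisfies the Leibniz rule C₁(f,g·h) = C₁(f,g)·h + g·C₁(f,h), then C₁ is a Poisson bracket on A (bilinear, antisymmetric, Leibniz, Jacobi). -/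
/-- The first-order term `C₁` of an associative deformation of a
commutative algebra `A` over a field of characteristic zero satisfies the Jacobi
identity; if moreover it satisfies the Leibniz rule, it is a Poisson bracket on `A`
(bilinear, antisymmetric, Leibniz, Jacobi). -/
theorem first_order_term_is_poisson_bracket
    {K A : Type*} [Field K] [CharZero K] [CommRing A] [Algebra K A]
    (C₁ C₂ : A →ₗ[K] A →ₗ[K] A)
    (hanti : ∀ f g : A, C₁ f g = - C₁ g f)
    (hsymm : ∀ f g : A, C₂ f g = C₂ g f)
    (hassoc : ∀ f g h : A,
      C₂ f g * h + C₁ (C₁ f g) h + C₂ (f * g) h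
        = f * C₂ g h + C₁ f (C₁ g h) + C₂ f (g * h)) :
    (∀ f g h : A, C₁ f (C₁ g h) + C₁ g (C₁ h f) + C₁ h (C₁ f g) = 0) ∧
    ((∀ f g h : A, C₁ f (g * h) = C₁ f g * h + g * C₁ f h) →
      ((∀ f g : A, C₁ f g = - C₁ g f) ∧
       (∀ f g h : A, C₁ f (g * h) = C₁ f g * h + g * C₁ f h) ∧
       (∀ f g h : A, C₁ f (C₁ g h) + C₁ g (C₁ h f) + C₁ h (C₁ f g) = 0))) := by
  have J : ∀ f g h : A, C₁ f (C₁ g h) + C₁ g (C₁ h f) + C₁ h (C₁ f g) = 0 := by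
    intro f g h
    have a1 := hassoc f g h
    have a2 := hassoc g h f
    have a3 := hassoc h f g
    rw [hanti (C₁ f g) h, hsymm (f * g) h] at a1
    rw [hanti (C₁ g h) f, hsymm (g * h) f] at a2
    rw [hanti (C₁ h f) g, hsymm (h * f) g] at a3
    have h2 : (2 : K) • (C₁ f (C₁ g h) + C₁ g (C₁ h f) + C₁ h (C₁ f g)) = 0 := by
      rw [two_smul]
      linear_combination -a1 - a2 - a3
    exact (smul_eq_zero.mp h2).resolve_left two_ne_zero
  exact ⟨J, fun hL => ⟨hanti, hL, J⟩⟩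
end

section
/- Let E : I → ℝ be smooth and positive on an open interval I ⊆ (0,∞), let c₁ ∈ ℝ and c₂ > 0, and set G(y) := c₂ · e^{2c₁√(E(y))} · E(y). Then for all y ∈ I: G(y)²E'(y)³ − 2E(y)²E'(y)G'(y)² + E(y)G(y)(E'(y)²G'(y) − 2E(y)G'(y)E''(y) + 2E(y)E'(y)G''(y)) = 0. Conversely, if E'(y) ≠ 0 for all y ∈ I and G : I → ℝ is smooth and positive with G²E'³ − 2E²E'G'² + EG(E'²G' − 2EG'E'' + 2EE'G'') = 0 on I, then there exist c₁ ∈ ℝ and c₂ > 0 such that G(y) = c₂ e^{2c₁√(E(y))} E(y) for all y ∈ I. -/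
/-- The numerator of the order-λ correction coefficient of `∇_Q dy` for the index pair
`(m,n) = (2,1)`:
`D = G²E'³ − 2E²E'G'² + EG(E'²G' − 2EG'E'' + 2EE'G'')`. -/
noncomputable def Dnum (E G : ℝ → ℝ) (y : ℝ) : ℝ :=
  (G y) ^ 2 * (deriv E y) ^ 3 - 2 * (E y) ^ 2 * deriv E y * (deriv G y) ^ 2
    + E y * G y * ((deriv E y) ^ 2 * deriv G y
        - 2 * E y * deriv G y * deriv (deriv E) y
        + 2 * E y * deriv E y * deriv (deriv G) y)

lemma aux_deriv {I : Set ℝ} (hI : IsOpen I) {E : ℝ → ℝ} (hE : ContDiffOn ℝ (⊤ : ℕ∞) E I)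
    {y : ℝ} (hy : y ∈ I) :
    HasDerivAt E (deriv E y) y ∧ HasDerivAt (deriv E) (deriv (deriv E) y) y := by
  have h1 : DifferentiableOn ℝ E I := hE.differentiableOn (by simp)
  have h2 : ContDiffOn ℝ 1 (deriv E) I :=
    hE.deriv_of_isOpen hI (by norm_num; exact WithTop.coe_le_coe.2 le_top)
  have h3 : DifferentiableOn ℝ (deriv E) I := h2.differentiableOn (by simp)
  exact ⟨(h1.differentiableAt (hI.mem_nhds hy)).hasDerivAt,
    (h3.differentiableAt (hI.mem_nhds hy)).hasDerivAt⟩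

lemma aux_const {I : Set ℝ} (hI : IsOpen I) (hc : I.OrdConnected) {f : ℝ → ℝ}
    (hf : ∀ y ∈ I, HasDerivAt f 0 y) : ∃ a, ∀ y ∈ I, f y = a :=
  hI.exists_is_const_of_deriv_eq_zero hc.isPreconnected
    (fun y hy => (hf y hy).differentiableAt.differentiableWithinAt)
    (fun y hy => (hf y hy).deriv)

/-- If `G(y) = c₂ e^{2c₁√(E(y))} E(y)` (with `c₂ > 0`), then `D = 0` on
the open interval `I ⊆ (0,∞)`.  Conversely, if `E' ≠ 0` on `I` and `G` is smooth, positive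
and satisfies `D = 0` on `I`, then `G(y) = c₂ e^{2c₁√(E(y))} E(y)` on `I` for some
constants `c₁ ∈ ℝ` and `c₂ > 0`. -/
theorem Dnum_vanishes_iff_exponential_family (I : Set ℝ)
    (hIopen : IsOpen I) (hIinterval : I.OrdConnected) (hIsub : I ⊆ Set.Ioi 0)
    (hIne : I.Nonempty)
    (E : ℝ → ℝ) (hE : ContDiffOn ℝ (⊤ : ℕ∞) E I) (hEpos : ∀ y ∈ I, 0 < E y) :
    (∀ c₁ : ℝ, ∀ c₂ : ℝ, 0 < c₂ →
      ∀ y ∈ I, Dnum E (fun z => c₂ * Real.exp (2 * c₁ * Real.sqrt (E z)) * E z) y = 0) ∧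
    (∀ G : ℝ → ℝ, ContDiffOn ℝ (⊤ : ℕ∞) G I → (∀ y ∈ I, 0 < G y) →
      (∀ y ∈ I, deriv E y ≠ 0) → (∀ y ∈ I, Dnum E G y = 0) →
      ∃ c₁ c₂ : ℝ, 0 < c₂ ∧
        ∀ y ∈ I, G y = c₂ * Real.exp (2 * c₁ * Real.sqrt (E y)) * E y) := by
  have hs : ∀ y ∈ I, HasDerivAt (fun z => Real.sqrt (E z)) (deriv E y / (2 * Real.sqrt (E y))) y :=
    fun y hy => (aux_deriv hIopen hE hy).1.sqrt (hEpos y hy).ne'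
  have hspos : ∀ y ∈ I, 0 < Real.sqrt (E y) := fun y hy => Real.sqrt_pos.2 (hEpos y hy)
  have hsq : ∀ y ∈ I, E y = Real.sqrt (E y) ^ 2 := fun y hy => (Real.sq_sqrt (hEpos y hy).le).symm
  constructor
  · intro c₁ c₂ hc₂ y hy
    have hX : ∀ z ∈ I, HasDerivAt (fun z => c₂ * Real.exp (2 * c₁ * Real.sqrt (E z)))
        (c₂ * (Real.exp (2 * c₁ * Real.sqrt (E z)) *
          (2 * c₁ * (deriv E z / (2 * Real.sqrt (E z)))))) z := fun z hz =>
      (((hs z hz).const_mul (2 * c₁)).exp).const_mul c₂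
    have hG1 : ∀ z ∈ I, HasDerivAt (fun z => c₂ * Real.exp (2 * c₁ * Real.sqrt (E z)) * E z)
        (c₂ * Real.exp (2 * c₁ * Real.sqrt (E z)) * ((1 + c₁ * Real.sqrt (E z)) * deriv E z)) z := by
      intro z hz
      refine ((hX z hz).mul (aux_deriv hIopen hE hz).1).congr_deriv ?_
      have h1 := hspos z hz
      have h2 := hsq z hz
      generalize Real.sqrt (E z) = s at *
      rw [h2]
      field_simp
      ring
    have hG2 : deriv (fun z => c₂ * Real.exp (2 * c₁ * Real.sqrt (E z)) * E z) =ᶠ[nhds y]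
        (fun z => c₂ * Real.exp (2 * c₁ * Real.sqrt (E z)) *
          ((1 + c₁ * Real.sqrt (E z)) * deriv E z)) := by
      filter_upwards [hIopen.mem_nhds hy] with z hz using (hG1 z hz).deriv
    have hG3 := (hX y hy).mul
      ((((hs y hy).const_mul c₁).const_add 1).mul (aux_deriv hIopen hE hy).2)
    have hG4 := hG2.deriv_eq.trans hG3.deriv
    unfold Dnum
    rw [hG4, (hG1 y hy).deriv]
    have h1 := hspos y hy
    have h2 := hsq y hy
    simp only [Pi.mul_apply]
    generalize Real.sqrt (E y) = s at *
    generalize Real.exp (2 * c₁ * s) = e at *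
    rw [h2]
    field_simp
    ring
  · intro G hG hGpos hE' hD
    obtain ⟨c₁, hc₁⟩ := aux_const hIopen hIinterval
      (f := fun y => (deriv G y * E y - G y * deriv E y) / (G y * deriv E y * Real.sqrt (E y))) (by
        intro y hy
        obtain ⟨e1, e2⟩ := aux_deriv hIopen hE hy
        obtain ⟨g1, g2⟩ := aux_deriv hIopen hG hy
        have h1 := hspos y hy
        have h2 := hsq y hy
        have h3 := hE' y hy
        have h4 := hGpos y hy
        have h5 := hD y hy
        refine (((g2.mul e1).sub (g1.mul e2)).div ((g1.mul e2).mul (hs y hy))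
          (by simp only [Pi.mul_apply]; positivity)).congr_deriv ?_
        simp only [Pi.mul_apply, Pi.sub_apply]
        unfold Dnum at h5
        rw [div_eq_zero_iff]
        left
        generalize Real.sqrt (E y) = s at *
        rw [h2] at h5 ⊢
        field_simp
        have h6 : s ^ 3 ≠ 0 := by positivity
        linear_combination h5)
    obtain ⟨b, hb⟩ := aux_const hIopen hIinterval
      (f := fun y => Real.log (G y) - Real.log (E y) - 2 * c₁ * Real.sqrt (E y)) (by
        intro y hy
        obtain ⟨e1, e2⟩ := aux_deriv hIopen hE hy
        obtain ⟨g1, g2⟩ := aux_deriv hIopen hG hy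
        have h1 := hspos y hy
        have h2 := hsq y hy
        have h3 := hE' y hy
        have h4 := hGpos y hy
        have h5 := hc₁ y hy
        refine (((g1.log h4.ne').sub (e1.log (hEpos y hy).ne')).sub
          ((hs y hy).const_mul (2 * c₁))).congr_deriv ?_
        rw [← h5]
        generalize Real.sqrt (E y) = s at *
        rw [h2]
        field_simp
        ring)
    refine ⟨c₁, Real.exp b, Real.exp_pos b, fun y hy => ?_⟩
    have h := hb y hy
    rw [← Real.exp_log (hGpos y hy)]
    nth_rewrite 2 [← Real.exp_log (hEpos y hy)]
    rw [← Real.exp_add, ← Real.exp_add]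
    congr 1
    linarith
end

section
/- (Main result 2, first part.) Let A > 0 be a constant and E : (0,∞) → ℝ smooth and positive, and consider the metric g = E(y)dx⊗dx + A·E(y)dy⊗dy on the upper half-plane, with Christoffel symbols Γ¹₁₂ = Γ¹₂₁ = Γ²₂₂ = E'/(2E), Γ²₁₁ = −E'/(2A·E), curvature components R¹₂₁₂ = −[(Γ¹₁₂)' + Γ¹₁₂Γ¹₂₁ − Γ²₂₂Γ¹₁₂] and R²₁₂₁ = (Γ²₁₁)' − Γ¹₁₂Γ²₁₁ + Γ²₁₁Γ²₂₂, and Poisson component ω¹²(y) = 1/E(y). Then the coefficient of the generalized Ricci form, 𝓡(y) := −½ ω¹²(y)·(E(y)·R¹₂₁₂(y) + A·E(y)·R²₁₂₁(y)), equals (E(y)E''(y) − E'(y)²)/(2E(y)²), i.e. 𝓡(y) = ½ (d²/dy²)(log E(y)) for all y > 0. -/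
/-- **Main result 2, first part.** For the metric
`g = E(y)dx⊗dx + A·E(y)dy⊗dy` on the upper half-plane (`A > 0` constant, `E` smooth
positive), with Christoffel symbols `Γ¹₁₂ = Γ¹₂₁ = Γ²₂₂ = E'/(2E)`, `Γ²₁₁ = −E'/(2AE)`,
curvature components `R¹₂₁₂ = −[(Γ¹₁₂)' + Γ¹₁₂Γ¹₂₁ − Γ²₂₂Γ¹₁₂]`,
`R²₁₂₁ = (Γ²₁₁)' − Γ¹₁₂Γ²₁₁ + Γ²₁₁Γ²₂₂`, and Poisson component `ω¹² = 1/E`, the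
generalized Ricci coefficient `𝓡 = −½ω¹²(E·R¹₂₁₂ + A·E·R²₁₂₁)` equals
`(EE'' − E'²)/(2E²)`, i.e. `𝓡 = ½(log E)''`. -/
theorem generalized_ricci_form_of_conformal_metric (A : ℝ) (hA : 0 < A)
    (E : ℝ → ℝ) (hE : ContDiffOn ℝ (⊤ : ℕ∞) E (Set.Ioi 0))
    (hEpos : ∀ y : ℝ, 0 < y → 0 < E y) :
    let Γ112 : ℝ → ℝ := fun y => deriv E y / (2 * E y)
    let Γ121 : ℝ → ℝ := fun y => deriv E y / (2 * E y)
    let Γ222 : ℝ → ℝ := fun y => deriv E y / (2 * E y)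
    let Γ211 : ℝ → ℝ := fun y => -deriv E y / (2 * (A * E y))
    let R1212 : ℝ → ℝ := fun y =>
      -(deriv Γ112 y + Γ112 y * Γ121 y - Γ222 y * Γ112 y)
    let R2121 : ℝ → ℝ := fun y =>
      deriv Γ211 y - Γ112 y * Γ211 y + Γ211 y * Γ222 y
    let ω : ℝ → ℝ := fun y => 1 / E y
    let Ric : ℝ → ℝ := fun y =>
      -(1 / 2) * ω y * (E y * R1212 y + A * E y * R2121 y)
    ∀ y : ℝ, 0 < y →
      Ric y = (E y * deriv (deriv E) y - (deriv E y) ^ 2) / (2 * (E y) ^ 2) ∧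
      Ric y = (1 / 2) * deriv (deriv (fun z => Real.log (E z))) y := by
  intro Γ112 Γ121 Γ222 Γ211 R1212 R2121 ω Ric y hy
  have hd : ∀ z : ℝ, 0 < z → HasDerivAt E (deriv E z) z := fun z hz =>
    ((hE.contDiffAt (Ioi_mem_nhds hz)).differentiableAt (by simp)).hasDerivAt
  have hE' : ContDiffOn ℝ 1 (deriv E) (Set.Ioi 0) :=
    hE.deriv_of_isOpen isOpen_Ioi (WithTop.coe_le_coe.mpr (le_top : (1 + 1 : ℕ∞) ≤ ⊤))
  have h2 : HasDerivAt (deriv E) (deriv (deriv E) y) y :=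
    ((hE'.contDiffAt (Ioi_mem_nhds hy)).differentiableAt (by simp)).hasDerivAt
  have h1 := hd y hy
  have hne : E y ≠ 0 := (hEpos y hy).ne'
  have hA0 : A ≠ 0 := hA.ne'
  have e1 : deriv Γ112 y = _ :=
    (h2.div (h1.const_mul 2) (mul_ne_zero two_ne_zero hne)).deriv
  have e2 : deriv Γ211 y = _ :=
    (h2.neg.div ((h1.const_mul A).const_mul 2)
      (mul_ne_zero two_ne_zero (mul_ne_zero hA0 hne))).deriv
  have e3 : deriv (deriv (fun z => Real.log (E z))) y
      = (deriv (deriv E) y * E y - deriv E y * deriv E y) / (E y) ^ 2 := by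
    have : deriv (fun z => Real.log (E z)) =ᶠ[nhds y] fun z => deriv E z / E z := by
      filter_upwards [Ioi_mem_nhds hy] with z hz
      exact ((hd z hz).log (hEpos z hz).ne').deriv
    rw [this.deriv_eq]
    exact (h2.div h1 hne).deriv
  have key : Ric y = (E y * deriv (deriv E) y - (deriv E y) ^ 2) / (2 * (E y) ^ 2) := by
    simp only [Ric, R1212, R2121, ω]
    rw [e1, e2]
    simp only [Γ112, Γ121, Γ222, Γ211, Pi.neg_apply]
    field_simp
    ring
  refine ⟨key, ?_⟩
  rw [key, e3]
  field_simp
end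

section
/- (Main result 2, solution families.) Let α ∈ ℝ, c₂ > 0 and y₀ ∈ ℝ. Then each of the following positive functions E satisfies the ODE (log E)''(y) − ½((log E)'(y))² = 2α on its domain of definition: (i) if α > 0, E(y) = c₂ / cos²(√α·(y − y₀)) on any open interval where cos(√α·(y − y₀)) ≠ 0; (ii) if α = 0, E(y) = c₂ / (y − y₀)² on any open interval not containing y₀; (iii) if α < 0, E(y) = c₂ / cosh²(√(−α)·(y − y₀)) on all of ℝ. In particular, the Poincaré-type function E(y) = y^{-2} (case α = 0, y₀ = 0, c₂ = 1) satisfies the ODE with α = 0. -/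
/-- The left-hand side of the ODE `(log E)'' − ½((log E)')² = 2α`. -/
noncomputable def Pode (E : ℝ → ℝ) (y : ℝ) : ℝ :=
  deriv (deriv (fun z => Real.log (E z))) y
    - (1 / 2) * (deriv (fun z => Real.log (E z)) y) ^ 2

theorem pode_of_linear (α c : ℝ) (hc : 0 < c) (Y Y1 : ℝ → ℝ) (y : ℝ)
    (h1 : ∀ z, HasDerivAt Y (Y1 z) z) (h2 : HasDerivAt Y1 (-α * Y y) y) (hy : Y y ≠ 0) :
    Pode (fun z => c / Y z ^ 2) y = 2 * α := by
  have hd : ∀ z, Y z ≠ 0 →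
      deriv (fun z => Real.log (c / Y z ^ 2)) z = -2 * (Y1 z / Y z) := by
    intro z hz
    have hz2 : Y z ^ 2 ≠ 0 := pow_ne_zero 2 hz
    have h := (((hasDerivAt_const z c).div ((h1 z).pow 2) hz2).log
      (div_ne_zero hc.ne' hz2)).deriv
    refine Eq.trans h ?_
    simp only [Pi.div_apply, Pi.pow_apply]
    have := hc.ne'
    field_simp
    ring
  have hev : deriv (fun z => Real.log (c / Y z ^ 2)) =ᶠ[nhds y]
      fun z => -2 * (Y1 z / Y z) := by
    filter_upwards [(h1 y).continuousAt.eventually_ne hy] with z hz using hd z hz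
  have h3 : deriv (fun z => -2 * (Y1 z / Y z)) y = _ :=
    ((h2.div (h1 y) hy).const_mul (-2)).deriv
  unfold Pode
  rw [hev.deriv_eq, hd y hy, h3]
  field_simp
  ring

/-- **Main result 2, solution families.** Each of the following positive
functions satisfies `(log E)'' − ½((log E)')² = 2α` on its domain:
(i) for `α > 0`, `E(y) = c₂/cos²(√α(y−y₀))` wherever `cos(√α(y−y₀)) ≠ 0`;
(ii) for `α = 0`, `E(y) = c₂/(y−y₀)²` away from `y₀`;
(iii) for `α < 0`, `E(y) = c₂/cosh²(√(−α)(y−y₀))` on all of `ℝ`.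
In particular the Poincaré-type function `E(y) = 1/y²` satisfies the ODE with `α = 0`. -/
theorem solution_families_of_quantum_levi_civita_ode (α c₂ y₀ : ℝ) (hc₂ : 0 < c₂) :
    (0 < α → ∀ y : ℝ, Real.cos (Real.sqrt α * (y - y₀)) ≠ 0 →
      Pode (fun z => c₂ / Real.cos (Real.sqrt α * (z - y₀)) ^ 2) y = 2 * α) ∧
    (α = 0 → ∀ y : ℝ, y ≠ y₀ →
      Pode (fun z => c₂ / (z - y₀) ^ 2) y = 2 * α) ∧
    (α < 0 → ∀ y : ℝ,
      Pode (fun z => c₂ / Real.cosh (Real.sqrt (-α) * (z - y₀)) ^ 2) y = 2 * α) ∧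
    (∀ y : ℝ, y ≠ 0 → Pode (fun z => 1 / z ^ 2) y = 0) := by
  have hlin : ∀ k z : ℝ, HasDerivAt (fun z => k * (z - y₀)) k z := by
    intro k z
    simpa using ((hasDerivAt_id z).sub_const y₀).const_mul k
  refine ⟨?_, ?_, ?_, ?_⟩
  · intro hα y hy
    have hs := Real.mul_self_sqrt hα.le
    refine pode_of_linear α c₂ hc₂ (fun z => Real.cos (Real.sqrt α * (z - y₀)))
      (fun z => -Real.sin (Real.sqrt α * (z - y₀)) * Real.sqrt α) y
      (fun z => (hlin _ z).cos) ?_ hy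
    refine HasDerivAt.congr_deriv ((hlin (Real.sqrt α) y).sin.neg.mul_const (Real.sqrt α)) ?_
    linear_combination -(Real.cos (Real.sqrt α * (y - y₀))) * hs
  · intro hα y hy
    refine pode_of_linear α c₂ hc₂ (fun z => z - y₀) (fun _ => 1) y
      (fun z => (hasDerivAt_id z).sub_const y₀) ?_ (sub_ne_zero.mpr hy)
    simpa [hα] using hasDerivAt_const y (1 : ℝ)
  · intro hα y
    have hs := Real.mul_self_sqrt (neg_pos.mpr hα).le
    refine pode_of_linear α c₂ hc₂ (fun z => Real.cosh (Real.sqrt (-α) * (z - y₀)))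
      (fun z => Real.sinh (Real.sqrt (-α) * (z - y₀)) * Real.sqrt (-α)) y
      (fun z => (hlin _ z).cosh) ?_ (Real.cosh_pos _).ne'
    refine HasDerivAt.congr_deriv ((hlin (Real.sqrt (-α)) y).sinh.mul_const (Real.sqrt (-α))) ?_
    linear_combination (Real.cosh (Real.sqrt (-α) * (y - y₀))) * hs
  · intro y hy
    have h := pode_of_linear 0 1 one_pos (fun z => z) (fun _ => 1) y
      (fun z => hasDerivAt_id z) (by simpa using hasDerivAt_const y (1 : ℝ)) hy
    simpa using h
end

section
/- Let I ⊆ ℝ be a nonempty open interval and E : I → ℝ smooth with E(y) > 0 on I. Then E satisfies (log E)''(y) = ½((log E)'(y))² for all y ∈ I (the case α = 0) if and only if there exist constants a, b ∈ ℝ such that a + b·y > 0 for all y ∈ I and E(y) = (a + b·y)^{-2} on I. -/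
/-- For a smooth positive function `E` on a nonempty open interval `I`,
the ODE `(log E)'' = ½((log E)')²` (the case `α = 0`) holds on `I` if and only if
`E(y) = (a + b·y)^{-2}` on `I` for some constants `a, b` with `a + b·y > 0` on `I`. -/
theorem alpha_zero_solutions (I : Set ℝ) (hIne : I.Nonempty)
    (hIopen : IsOpen I) (hIinterval : I.OrdConnected)
    (E : ℝ → ℝ) (hE : ContDiffOn ℝ (⊤ : ℕ∞) E I) (hEpos : ∀ y ∈ I, 0 < E y) :
    (∀ y ∈ I,
      deriv (deriv (fun z => Real.log (E z))) y
        = (1 / 2) * (deriv (fun z => Real.log (E z)) y) ^ 2)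
    ↔ ∃ a b : ℝ, (∀ y ∈ I, 0 < a + b * y) ∧
        ∀ y ∈ I, E y = ((a + b * y) ^ 2)⁻¹ := by
  have hnhds : ∀ y ∈ I, I ∈ nhds y := fun y hy => hIopen.mem_nhds hy
  constructor
  · intro h
    have hL : ContDiffOn ℝ (⊤ : ℕ∞) (fun z => Real.log (E z)) I :=
      hE.log (fun y hy => (hEpos y hy).ne')
    set L : ℝ → ℝ := fun z => Real.log (E z) with hLdef
    have hL1 : ∀ y ∈ I, HasDerivAt L (deriv L y) y := fun y hy =>
      ((hL.contDiffAt (hnhds y hy)).differentiableAt (by simp)).hasDerivAt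
    have hL' : ContDiffOn ℝ 1 (deriv L) I :=
      hL.deriv_of_isOpen hIopen (by
        have : (((2 : ℕ∞) : WithTop ℕ∞)) ≤ ((⊤ : ℕ∞) : WithTop ℕ∞) := WithTop.coe_le_coe.2 le_top
        simpa [one_add_one_eq_two] using this)
    have hL2 : ∀ y ∈ I, HasDerivAt (deriv L) (deriv (deriv L) y) y := fun y hy =>
      ((hL'.contDiffAt (hnhds y hy)).differentiableAt (by simp)).hasDerivAt
    have hpre : IsPreconnected I := hIinterval.isPreconnected
    have hY : ∀ y ∈ I, HasDerivAt (fun z => Real.exp (-(1/2) * L z))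
        (Real.exp (-(1/2) * L y) * (-(1/2) * deriv L y)) y := fun y hy =>
      ((hL1 y hy).const_mul (-(1/2))).exp
    have hW : ∀ y ∈ I, HasDerivAt (fun z => Real.exp (-(1/2) * L z) * (-(1/2) * deriv L z)) 0 y := by
      intro y hy
      have := (hY y hy).mul ((hL2 y hy).const_mul (-(1/2)))
      refine HasDerivAt.congr_deriv this ?_
      rw [h y hy]; ring
    obtain ⟨x, hx⟩ := hIne
    have hWc : ∀ y ∈ I, Real.exp (-(1/2) * L y) * (-(1/2) * deriv L y)
        = Real.exp (-(1/2) * L x) * (-(1/2) * deriv L x) := fun y hy =>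
      hIopen.is_const_of_deriv_eq_zero hpre
        (fun z hz => (hW z hz).differentiableAt.differentiableWithinAt)
        (fun z hz => (hW z hz).deriv) hy hx
    set b := Real.exp (-(1/2) * L x) * (-(1/2) * deriv L x) with hb
    have hV : ∀ y ∈ I, HasDerivAt (fun z => Real.exp (-(1/2) * L z) - b * z) 0 y := by
      intro y hy
      have := (hY y hy).sub ((hasDerivAt_id y).const_mul b)
      refine HasDerivAt.congr_deriv this ?_
      rw [hWc y hy]; ring
    have hVc : ∀ y ∈ I, Real.exp (-(1/2) * L y) - b * y = Real.exp (-(1/2) * L x) - b * x :=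
      fun y hy => hIopen.is_const_of_deriv_eq_zero hpre
        (fun z hz => (hV z hz).differentiableAt.differentiableWithinAt)
        (fun z hz => (hV z hz).deriv) hy hx
    have key : ∀ y ∈ I, (Real.exp (-(1/2) * L x) - b * x) + b * y = Real.exp (-(1/2) * L y) :=
      fun y hy => by rw [← hVc y hy]; ring
    refine ⟨Real.exp (-(1/2) * L x) - b * x, b, fun y hy => ?_, fun y hy => ?_⟩
    · rw [key y hy]; exact Real.exp_pos _
    · rw [key y hy, ← Real.exp_nat_mul, ← Real.exp_neg]
      have : -(((2 : ℕ) : ℝ) * (-(1/2) * L y)) = L y := by push_cast; ring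
      rw [this, hLdef]
      exact (Real.exp_log (hEpos y hy)).symm
  · rintro ⟨a, b, hpos, hEq⟩
    have hlin : ∀ y : ℝ, HasDerivAt (fun z => a + b * z) b y := fun y => by
      simpa using ((hasDerivAt_id y).const_mul b).const_add a
    have h1 : ∀ y ∈ I, deriv (fun z => Real.log (E z)) y = -2 * (b / (a + b * y)) := by
      intro y hy
      have e : (fun z => Real.log (E z)) =ᶠ[nhds y] fun z => -2 * Real.log (a + b * z) := by
        filter_upwards [hnhds y hy] with z hz
        rw [hEq z hz, Real.log_inv, Real.log_pow]; push_cast; ring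
      rw [e.deriv_eq]
      exact (((hlin y).log (hpos y hy).ne').const_mul (-2)).deriv
    intro y hy
    have hne := (hpos y hy).ne'
    have e : deriv (fun z => Real.log (E z)) =ᶠ[nhds y] fun z => -2 * (b / (a + b * z)) := by
      filter_upwards [hnhds y hy] with z hz using h1 z hz
    rw [e.deriv_eq, h1 y hy]
    refine Eq.trans ((((hasDerivAt_const y b).div (hlin y) hne)).const_mul (-2)).deriv ?_
    field_simp
    ring
end

section
/- (Main result 3, classical data.) Let t ∈ ℝ and consider the metric g = y^{-2} dx⊗dx + e^{2t/y} y^{-2} dy⊗dy on the upper half-plane, i.e. E(y) = y^{-2}, G(y) = e^{2t/y} y^{-2}. Then its nonzero Levi-Civita Christoffel symbols are Γ¹₁₂ = Γ¹₂₁ = −1/y, Γ²₁₁ = e^{-2t/y}/y, Γ²₂₂ = −(t + y)/y²; the nonzero Riemann curvature components are R¹₂₂₁ = (y − t)/y³ = −R¹₂₁₂ and R²₁₁₂ = e^{-2t/y}(y − t)/y³ = −R²₁₂₁; and the scalar curvature is R = g^{11}R²₁₂₁ + g^{22}R¹₂₁₂ = 2 e^{-2t/y}(t − y)/y. At t = 0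 these reduce to the corresponding data of the Poincaré metric (in particular R = −2). -/
/-- Coordinate partial derivatives for functions of `y` alone: `∂₁ = 0`, `∂₂ = d/dy`. -/
noncomputable def pd : Fin 2 → (ℝ → ℝ) → ℝ → ℝ := ![fun _ _ => 0, fun f => deriv f]

/-- The metric `g = E(y) dx⊗dx + G(y) dy⊗dy`. -/
noncomputable def gmet (E G : ℝ → ℝ) : Fin 2 → Fin 2 → ℝ → ℝ :=
  ![![E, fun _ => 0], ![fun _ => 0, G]]

/-- The inverse metric. -/
noncomputable def ginv (E G : ℝ → ℝ) : Fin 2 → Fin 2 → ℝ → ℝ :=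
  ![![fun y => 1 / E y, fun _ => 0], ![fun _ => 0, fun y => 1 / G y]]

/-- Christoffel symbols `Γ^i_{jk} = ½ Σ_l g^{il}(∂_j g_{kl} + ∂_k g_{jl} − ∂_l g_{jk})`. -/
noncomputable def chr (E G : ℝ → ℝ) (i j k : Fin 2) : ℝ → ℝ := fun y =>
  (1 / 2) * ∑ l : Fin 2, ginv E G i l y *
    (pd j (gmet E G k l) y + pd k (gmet E G j l) y - pd l (gmet E G j k) y)

/-- Riemann curvature tensor
`R^i_{jkl} = ∂_kΓ^i_{lj} − ∂_lΓ^i_{kj} + Σ_m (Γ^m_{lj}Γ^i_{km} − Γ^m_{kj}Γ^i_{lm})`. -/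
noncomputable def Riem (E G : ℝ → ℝ) (i j k l : Fin 2) : ℝ → ℝ := fun y =>
  pd k (chr E G i l j) y - pd l (chr E G i k j) y +
    ∑ m : Fin 2, (chr E G m l j y * chr E G i k m y - chr E G m k j y * chr E G i l m y)

/-- Scalar curvature `R = g^{ij} R^k_{ikj}`. -/
noncomputable def scal (E G : ℝ → ℝ) : ℝ → ℝ := fun y =>
  ∑ i : Fin 2, ∑ j : Fin 2, ginv E G i j y * ∑ k : Fin 2, Riem E G k i k j y

set_option linter.unusedSimpArgs false

theorem aux_dE (y : ℝ) (hy : 0 < y) : deriv (fun y : ℝ => (y ^ 2)⁻¹) y = -2 / y ^ 3 := by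
  have h := ((hasDerivAt_pow 2 y).inv (by positivity))
  refine (HasDerivAt.deriv (f := fun y : ℝ => (y ^ 2)⁻¹) (h.congr_deriv ?_))
  push_cast
  field_simp
  try ring

theorem aux_exp (c y : ℝ) (hy : 0 < y) :
    HasDerivAt (fun y : ℝ => Real.exp (c / y)) (Real.exp (c / y) * (-c / y ^ 2)) y := by
  have h := (((hasDerivAt_id y).inv hy.ne').const_mul c).exp
  have h2 : (fun y : ℝ => Real.exp (c / y)) = fun y => Real.exp (c * (id y)⁻¹) := by
    funext z; simp [div_eq_mul_inv]
  rw [h2]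
  refine h.congr_deriv ?_
  simp [div_eq_mul_inv]

theorem aux_dG (t y : ℝ) (hy : 0 < y) :
    deriv (fun y : ℝ => Real.exp (2 * t / y) * (y ^ 2)⁻¹) y
      = Real.exp (2 * t / y) * (-2 * (t + y) / y ^ 4) := by
  have h := (hasDerivAt_pow 2 y).inv (by positivity)
  have h2 := (aux_exp (2 * t) y hy).mul h
  refine (HasDerivAt.deriv (f := fun y : ℝ => Real.exp (2 * t / y) * (y ^ 2)⁻¹)
    (h2.congr_deriv ?_))
  simp
  field_simp
  ring

theorem aux_pd (i : Fin 2) (f g : ℝ → ℝ) (g' y : ℝ) (hy : 0 < y)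
    (hfg : ∀ z, 0 < z → f z = g z) (hg : HasDerivAt g g' y) :
    pd i f y = if i = 0 then 0 else g' := by
  fin_cases i
  · simp [pd]
  · have : f =ᶠ[nhds y] g := by
      filter_upwards [lt_mem_nhds hy] with z hz using hfg z hz
    simp [pd, this.deriv_eq, hg.deriv]

/-- **Main result 3, classical data.** For the `t`-deformed Poincaré metric
`g = y⁻²dx⊗dx + e^{2t/y}y⁻²dy⊗dy` on the upper half-plane, the nonzero Christoffel symbols
are `Γ¹₁₂ = Γ¹₂₁ = −1/y`, `Γ²₁₁ = e^{−2t/y}/y`, `Γ²₂₂ = −(t+y)/y²`; the nonzero curvature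
components are `R¹₂₂₁ = (y−t)/y³ = −R¹₂₁₂`, `R²₁₁₂ = e^{−2t/y}(y−t)/y³ = −R²₁₂₁`; and the
scalar curvature is `R = 2e^{−2t/y}(t−y)/y`, which at `t = 0` reduces to the Poincaré
value `−2`. -/
theorem t_deformed_poincare_classical_data (t : ℝ) :
    let E : ℝ → ℝ := fun y => (y ^ 2)⁻¹
    let G : ℝ → ℝ := fun y => Real.exp (2 * t / y) * (y ^ 2)⁻¹
    ∀ y : ℝ, 0 < y →
      (chr E G 0 0 1 y = -1 / y ∧
       chr E G 0 1 0 y = -1 / y ∧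
       chr E G 1 0 0 y = Real.exp (-(2 * t) / y) / y ∧
       chr E G 1 1 1 y = -(t + y) / y ^ 2 ∧
       chr E G 0 0 0 y = 0 ∧ chr E G 0 1 1 y = 0 ∧
       chr E G 1 0 1 y = 0 ∧ chr E G 1 1 0 y = 0) ∧
      (Riem E G 0 1 1 0 y = (y - t) / y ^ 3 ∧
       Riem E G 0 1 0 1 y = -((y - t) / y ^ 3) ∧
       Riem E G 1 0 0 1 y = Real.exp (-(2 * t) / y) * (y - t) / y ^ 3 ∧
       Riem E G 1 0 1 0 y = -(Real.exp (-(2 * t) / y) * (y - t) / y ^ 3) ∧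
       (∀ i j k l : Fin 2,
         (i, j, k, l) ∉ ({(0, 1, 1, 0), (0, 1, 0, 1), (1, 0, 0, 1), (1, 0, 1, 0)} :
             Set (Fin 2 × Fin 2 × Fin 2 × Fin 2)) →
         Riem E G i j k l y = 0)) ∧
      scal E G y = 2 * Real.exp (-(2 * t) / y) * (t - y) / y ∧
      (t = 0 → scal E G y = -2) := by
  intro E G
  have c001 : ∀ y, 0 < y → chr E G 0 0 1 y = -1 / y := by
    intro y hy
    simp [chr, pd, gmet, ginv, E, aux_dE y hy]
    field_simp
  have c010 : ∀ y, 0 < y → chr E G 0 1 0 y = -1 / y := by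
    intro y hy
    simp [chr, pd, gmet, ginv, E, aux_dE y hy]
    field_simp
  have c100 : ∀ y, 0 < y → chr E G 1 0 0 y = Real.exp (-(2 * t) / y) / y := by
    intro y hy
    simp [chr, pd, gmet, ginv, E, G, aux_dE y hy, neg_div, Real.exp_neg]
    field_simp
  have c111 : ∀ y, 0 < y → chr E G 1 1 1 y = -(t + y) / y ^ 2 := by
    intro y hy
    simp [chr, pd, gmet, ginv, G, aux_dG t y hy]
    field_simp
    try ring
  have c000 : ∀ y, 0 < y → chr E G 0 0 0 y = 0 := by
    intro y hy
    simp [chr, pd, gmet, ginv]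
  have c011 : ∀ y, 0 < y → chr E G 0 1 1 y = 0 := by
    intro y hy
    simp [chr, pd, gmet, ginv]
  have c101 : ∀ y, 0 < y → chr E G 1 0 1 y = 0 := by
    intro y hy
    simp [chr, pd, gmet, ginv]
  have c110 : ∀ y, 0 < y → chr E G 1 1 0 y = 0 := by
    intro y hy
    simp [chr, pd, gmet, ginv]
  intro y hy
  have dinv : HasDerivAt (fun y : ℝ => -1 / y) (1 / y ^ 2) y := by
    have h := ((hasDerivAt_id y).inv hy.ne').const_mul (-1)
    have h2 : (fun y : ℝ => -1 / y) = fun y => -1 * (id y)⁻¹ := by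
      funext z; simp [div_eq_mul_inv]
    rw [h2]
    refine h.congr_deriv ?_
    simp [div_eq_mul_inv]
  have d100 : HasDerivAt (fun y : ℝ => Real.exp (-(2 * t) / y) / y)
      (Real.exp (-(2 * t) / y) * (2 * t - y) / y ^ 3) y := by
    refine ((aux_exp (-(2 * t)) y hy).div (hasDerivAt_id y) hy.ne').congr_deriv ?_
    simp only [id]
    field_simp
    try ring
  have d111 : HasDerivAt (fun y : ℝ => -(t + y) / y ^ 2) ((2 * t + y) / y ^ 3) y := by
    refine ((((hasDerivAt_id y).const_add t).neg).div (hasDerivAt_pow 2 y)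
      (by positivity)).congr_deriv ?_
    simp
    field_simp
    ring
  have d0 : HasDerivAt (fun _ : ℝ => (0 : ℝ)) 0 y := hasDerivAt_const y 0
  have p001 := fun i => aux_pd i _ _ _ y hy c001 dinv
  have p010 := fun i => aux_pd i _ _ _ y hy c010 dinv
  have p100 := fun i => aux_pd i _ _ _ y hy c100 d100
  have p111 := fun i => aux_pd i _ _ _ y hy c111 d111
  have p000 := fun i => aux_pd i _ _ _ y hy c000 d0
  have p011 := fun i => aux_pd i _ _ _ y hy c011 d0
  have p101 := fun i => aux_pd i _ _ _ y hy c101 d0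
  have p110 := fun i => aux_pd i _ _ _ y hy c110 d0
  have r0110 : Riem E G 0 1 1 0 y = (y - t) / y ^ 3 := by
    simp [Riem, p001, p010, p100, p111, p000, p011, p101, p110, c001 y hy, c010 y hy,
      c100 y hy, c111 y hy, c000 y hy, c011 y hy, c101 y hy, c110 y hy]
    field_simp
    ring
  have r0101 : Riem E G 0 1 0 1 y = -((y - t) / y ^ 3) := by
    simp [Riem, p001, p010, p100, p111, p000, p011, p101, p110, c001 y hy, c010 y hy,
      c100 y hy, c111 y hy, c000 y hy, c011 y hy, c101 y hy, c110 y hy]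
    field_simp
    ring
  have r1001 : Riem E G 1 0 0 1 y = Real.exp (-(2 * t) / y) * (y - t) / y ^ 3 := by
    simp [Riem, p001, p010, p100, p111, p000, p011, p101, p110, c001 y hy, c010 y hy,
      c100 y hy, c111 y hy, c000 y hy, c011 y hy, c101 y hy, c110 y hy]
    generalize Real.exp (-(2 * t) / y) = e
    field_simp
    ring
  have r1010 : Riem E G 1 0 1 0 y = -(Real.exp (-(2 * t) / y) * (y - t) / y ^ 3) := by
    simp [Riem, p001, p010, p100, p111, p000, p011, p101, p110, c001 y hy, c010 y hy,
      c100 y hy, c111 y hy, c000 y hy, c011 y hy, c101 y hy, c110 y hy]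
    generalize Real.exp (-(2 * t) / y) = e
    field_simp
    ring
  have r0 : ∀ i j k l : Fin 2,
         (i, j, k, l) ∉ ({(0, 1, 1, 0), (0, 1, 0, 1), (1, 0, 0, 1), (1, 0, 1, 0)} :
             Set (Fin 2 × Fin 2 × Fin 2 × Fin 2)) →
         Riem E G i j k l y = 0 := by
    intro i j k l h
    fin_cases i <;> fin_cases j <;> fin_cases k <;> fin_cases l <;>
    first
    | (exfalso; revert h; simp; done)
    | (clear h
       simp [Riem, p001, p010, p100, p111, p000, p011, p101, p110, c001 y hy, c010 y hy,
        c100 y hy, c111 y hy, c000 y hy, c011 y hy, c101 y hy, c110 y hy]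
       try ring_nf)
  have hs : scal E G y = 2 * Real.exp (-(2 * t) / y) * (t - y) / y := by
    have a := r0 0 0 0 0 (by simp)
    have b := r0 1 1 1 1 (by simp)
    simp [scal, a, b, r0101, r1010, ginv, E, G, neg_div, Real.exp_neg]
    field_simp
    ring
  refine ⟨⟨c001 y hy, c010 y hy, c100 y hy, c111 y hy, c000 y hy, c011 y hy, c101 y hy,
    c110 y hy⟩, ⟨r0110, r0101, r1001, r1010, r0⟩, hs, ?_⟩
  intro ht
  rw [hs, ht]
  simp
  field_simp
end

section
/- (Main result 3, quantum Levi-Civita condition.) Let t ∈ ℝ, let 𝓡(y) := e^{-t/y}(y − t)·y^{-3} (the generalized Ricci coefficient of the t-deformed Poincaré metric), and let Γ¹₂₁(y) = −1/y, Γ²₂₂(y) = −(t + y)/y² be Christoffel symbols of that metric. Then for all y > 0: 𝓡'(y) − 𝓡(y)·(Γ¹₂₁(y) + Γ²₂₂(y)) = −t·e^{-t/y}(2t − 3y)·y^{-5}. In particular, 𝓡'(y) = −e^{-t/y}(t² − 4ty + 2y²)·y^{-5}, and the left-hand side vanishes for all y > 0 if and only if t = 0. (Hence ∇𝓡 ≠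 0 for t ≠ 0, so the semiquantized connection ∇_Q is not a quantum Levi-Civita connection for the quantum metric g₁ unless t = 0, though its contraction by the wedge product — the cotorsion — vanishes, making ∇_Q a weak quantum Levi-Civita connection.) -/
/-- **Main result 3, quantum Levi-Civita condition.** For the `t`-deformed
Poincaré metric, with generalized Ricci coefficient `𝓡(y) = e^{−t/y}(y−t)/y³` and
Christoffel symbols `Γ¹₂₁ = −1/y`, `Γ²₂₂ = −(t+y)/y²`, one has for all `y > 0`
`𝓡' − 𝓡(Γ¹₂₁ + Γ²₂₂) = −t e^{−t/y}(2t−3y)/y⁵` and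
`𝓡' = −e^{−t/y}(t² − 4ty + 2y²)/y⁵`; moreover the left-hand side vanishes for all
`y > 0` if and only if `t = 0`.  (Hence `∇𝓡 ≠ 0` for `t ≠ 0`, so `∇_Q` is not a quantum
Levi-Civita connection for `g₁` unless `t = 0`.) -/
theorem t_deformed_quantum_levi_civita_condition (t : ℝ) :
    let Ric : ℝ → ℝ := fun y => Real.exp (-t / y) * (y - t) / y ^ 3
    let Γ121 : ℝ → ℝ := fun y => -1 / y
    let Γ222 : ℝ → ℝ := fun y => -(t + y) / y ^ 2
    (∀ y : ℝ, 0 < y →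
      deriv Ric y - Ric y * (Γ121 y + Γ222 y)
        = -(t * Real.exp (-t / y) * (2 * t - 3 * y) / y ^ 5) ∧
      deriv Ric y = -(Real.exp (-t / y) * (t ^ 2 - 4 * t * y + 2 * y ^ 2) / y ^ 5)) ∧
    ((∀ y : ℝ, 0 < y → deriv Ric y - Ric y * (Γ121 y + Γ222 y) = 0) ↔ t = 0) := by
  intro Ric Γ121 Γ222
  have hd : ∀ y : ℝ, 0 < y →
      deriv Ric y = -(Real.exp (-t / y) * (t ^ 2 - 4 * t * y + 2 * y ^ 2) / y ^ 5) := by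
    intro y hy
    have hy0 : y ≠ 0 := hy.ne'
    have h1 : HasDerivAt (fun y : ℝ => -t / y) ((0 * y - (-t) * 1) / y ^ 2) y :=
      (hasDerivAt_const y (-t)).fun_div (hasDerivAt_id' y) hy0
    have h2 := (h1.exp.fun_mul ((hasDerivAt_id' y).sub_const t)).fun_div
      (hasDerivAt_pow 3 y) (pow_ne_zero 3 hy0)
    have h3 : deriv Ric y = _ := h2.deriv
    rw [h3]
    generalize Real.exp (-t / y) = E
    field_simp
    push_cast
    ring
  have hm : ∀ y : ℝ, 0 < y →
      deriv Ric y - Ric y * (Γ121 y + Γ222 y)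
        = -(t * Real.exp (-t / y) * (2 * t - 3 * y) / y ^ 5) := by
    intro y hy
    have hy0 : y ≠ 0 := hy.ne'
    rw [hd y hy]
    simp only [Ric, Γ121, Γ222]
    generalize Real.exp (-t / y) = E
    field_simp
    ring
  refine ⟨fun y hy => ⟨hm y hy, hd y hy⟩, fun h => ?_, fun h y hy => ?_⟩
  · have key : ∀ y : ℝ, 0 < y → t * (2 * t - 3 * y) = 0 := by
      intro y hy
      have h1 := h y hy
      rw [hm y hy, neg_eq_zero, div_eq_zero_iff] at h1
      rcases h1 with h1 | h1
      · have h2 : Real.exp (-t / y) * (t * (2 * t - 3 * y)) = 0 := by linarith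
        exact (mul_eq_zero.mp h2).resolve_left (Real.exp_pos _).ne'
      · exact absurd h1 (pow_ne_zero 5 hy.ne')
    have a := key 1 one_pos
    have b := key 2 two_pos
    linarith
  · rw [hm y hy, h]
    simp
end
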